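/- arXiv:math/0701309 — 2 statements merged into one kernel-verified Lean document; each statement's English description precedes it below -/
import Mathlib

section
/- With γ_i := γ'_i − Σ_j ε(γ'_i h_j) h*_j, one has d γ_i = α_i and ε(γ_i · z) = 0 for every cocycle z ∈ ker d. -/
namespace PDCDGA

variable {k : Type} [Field k]

/-- Graded commutativity with Koszul signs, together with the convention that
squares of odd-degree elements vanish (also in characteristic 2). -/
structure GradedComm {A : Type} [Ring A] [Algebra k A] (𝒜 : ℕ → Submodule k A) : Prop where
  mul_comm : ∀ (i j : ℕ) (a b : A), a ∈ 𝒜 i → b ∈ 𝒜 j →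
    a * b = ((-1 : k) ^ (i * j)) • (b * a)
  odd_sq : ∀ i : ℕ, Odd i → ∀ a ∈ 𝒜 i, a * a = 0

/-- A `k`-linear differential of degree `+1` satisfying the graded Leibniz rule. -/
structure IsDifferential {A : Type} [Ring A] [Algebra k A] (𝒜 : ℕ → Submodule k A)
    (d : A →ₗ[k] A) : Prop where
  grade : ∀ i : ℕ, ∀ a ∈ 𝒜 i, d a ∈ 𝒜 (i + 1)
  d_sq : ∀ a : A, d (d a) = 0
  leibniz : ∀ (i : ℕ) (a b : A), a ∈ 𝒜 i →
    d (a * b) = d a * b + ((-1 : k) ^ i) • (a * d b)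

/-- An orientation `ε : A → k`, concentrated in degree `n`, vanishing on boundaries
and inducing an epimorphism `Hⁿ(A) → k`. -/
structure IsOrientation {A : Type} [Ring A] [Algebra k A] (𝒜 : ℕ → Submodule k A)
    (d : A →ₗ[k] A) (n : ℕ) (ε : A →ₗ[k] k) : Prop where
  homog : ∀ i : ℕ, i ≠ n → ∀ a ∈ 𝒜 i, ε a = 0
  eps_d : ∀ a : A, ε (d a) = 0
  exists_cocycle : ∃ μ : A, μ ∈ 𝒜 n ∧ d μ = 0 ∧ ε μ = 1

/-- The orphan ideal `O = {a | ∀ b, ε (a·b) = 0}` (as a `k`-submodule). -/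
def Orphans {A : Type} [Ring A] [Algebra k A] (ε : A →ₗ[k] k) : Submodule k A :=
  ⨅ b : A, LinearMap.ker (ε ∘ₗ LinearMap.mulRight k b)

lemma mem_orphans {A : Type} [Ring A] [Algebra k A] (ε : A →ₗ[k] k) (a : A) :
    a ∈ Orphans ε ↔ ∀ b : A, ε (a * b) = 0 := by
  simp [Orphans]

/-- `H^*(A,d)` is a Poincaré duality algebra in dimension `n` with respect to the
orientation `ε`: every nonzero cohomology class pairs nontrivially with some class
in the complementary degree. -/
def CohomologyPD {A : Type} [Ring A] [Algebra k A] (𝒜 : ℕ → Submodule k A)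
    (d : A →ₗ[k] A) (n : ℕ) (ε : A →ₗ[k] k) : Prop :=
  ∀ (i : ℕ) (a : A), a ∈ 𝒜 i → d a = 0 → a ∉ LinearMap.range d →
    ∃ (j : ℕ) (b : A), i + j = n ∧ b ∈ 𝒜 j ∧ d b = 0 ∧ ε (a * b) ≠ 0

/-- The orphan ideal is `N`-half-acyclic: `Hⁱ(O) = 0` for `n/2 + 1 ≤ i ≤ N`
(the condition `n/2 + 1 ≤ i` is written as `n + 2 ≤ 2 * i`). -/
def OrphansHalfAcyclic {A : Type} [Ring A] [Algebra k A] (𝒜 : ℕ → Submodule k A)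
    (d : A →ₗ[k] A) (n : ℕ) (ε : A →ₗ[k] k) (N : ℕ) : Prop :=
  ∀ i : ℕ, n + 2 ≤ 2 * i → i ≤ N → ∀ a : A, a ∈ Orphans ε → a ∈ 𝒜 i → d a = 0 →
    ∃ b : A, b ∈ Orphans ε ∧ b ∈ 𝒜 (i - 1) ∧ a = d b

/-- A chain map is a quasi-isomorphism: it induces a bijection on cohomology. -/
def IsQuasiIso {A B : Type} [Ring A] [Algebra k A] [Ring B] [Algebra k B]
    (d : A →ₗ[k] A) (D : B →ₗ[k] B) (f : A → B) : Prop :=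
  (∀ a : A, d a = 0 → (∃ b : B, f a = D b) → ∃ a' : A, a = d a') ∧
  (∀ x : B, D x = 0 → ∃ (a : A) (b : B), d a = 0 ∧ x = f a + D b)

/-- Indices of the monomial basis of `Λ(c₁,…,c_l,w₁,…,w_l)`, where `c_i` has degree
`q+1` and `w_i` has degree `q`: exponents of odd-degree generators are at most 1. -/
def MonIdx (q l : ℕ) : Type :=
  {se : (Fin l → ℕ) × (Fin l → ℕ) //
    (Odd (q + 1) → ∀ i, se.1 i ≤ 1) ∧ (Odd q → ∀ i, se.2 i ≤ 1)}

/-- The monomial `c₁^{s₁} ⋯ c_l^{s_l} · w₁^{e₁} ⋯ w_l^{e_l}`. -/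
def monomial {B : Type} [Monoid B] {l : ℕ} (c w : Fin l → B)
    (μ : (Fin l → ℕ) × (Fin l → ℕ)) : B :=
  (((List.finRange l).map fun i => c i ^ μ.1 i).prod) *
    (((List.finRange l).map fun i => w i ^ μ.2 i).prod)

/-!
Subtracting `∑ ε(γ' h_j) h*_j` alters `γ'` only by a cocycle, and makes the result `γ` orthogonal to
every `h_j`. Since `dγ = dγ'` is an orphan, `ε(dγ · b) = 0`, and applying `ε ∘ d = 0` to the Leibniz
rule for `γ b` gives `ε(γ · db) = 0`: so `γ` is also orthogonal to boundaries. Finally `ε(γ z)` only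
sees the component of `z` in the degree complementary to that of `γ`; for a cocycle `z` this
component is again a cocycle, hence a combination of the `h_j` plus a boundary.
-/

section DualFamily

variable {R M N P ι : Type*} [CommRing R] [AddCommGroup M] [Module R M] [AddCommMonoid N]
  [Module R N] [AddCommGroup P] [Module R P] [Fintype ι]

/-- The part of `x` left after removing its components along `e'`, where `e'` is meant to be dual
to `e` under the bilinear pairing `B`. Duality is left to the lemmas that need it. -/
def dualResidual (B : M →ₗ[R] N →ₗ[R] R) (e : ι → N) (e' : ι → M) (x : M) : M :=
  x - ∑ j, B x (e j) • e' j

variable (B : M →ₗ[R] N →ₗ[R] R) (e : ι → N) {e' : ι → M}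

lemma dualResidual_mem {S : Submodule R M} {x : M} (hx : x ∈ S) (he' : ∀ j, e' j ∈ S) :
    dualResidual B e e' x ∈ S :=
  S.sub_mem hx (S.sum_mem fun j _ ↦ S.smul_mem _ (he' j))

lemma map_dualResidual {f : M →ₗ[R] P} (he' : ∀ j, f (e' j) = 0) (x : M) :
    f (dualResidual B e e' x) = f x := by
  simp [dualResidual, he']

variable {B e}

lemma apply_dualResidual_eq_zero [DecidableEq ι]
    (hdual : ∀ i j, B (e' i) (e j) = if i = j then 1 else 0) (x : M) (j : ι) :
    B (dualResidual B e e' x) (e j) = 0 := by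
  simp [dualResidual, hdual]

lemma span_range_le_ker_dualResidual [DecidableEq ι]
    (hdual : ∀ i j, B (e' i) (e j) = if i = j then 1 else 0) (x : M) :
    Submodule.span R (Set.range e) ≤ LinearMap.ker (B (dualResidual B e e' x)) :=
  Submodule.span_le.2 (Set.range_subset_iff.2 (apply_dualResidual_eq_zero hdual x))

end DualFamily

lemma mem_span_range_sup_of_sub_sum_mem {R M ι : Type*} [Ring R] [AddCommGroup M] [Module R M]
    [Fintype ι] {e : ι → M} {S : Submodule R M} {x : M} (c : ι → R)
    (hx : x - ∑ j, c j • e j ∈ S) : x ∈ Submodule.span R (Set.range e) ⊔ S :=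
  Submodule.mem_sup.2
    ⟨_, Submodule.mem_span_range_iff_exists_fun R |>.2 ⟨c, rfl⟩, _, hx, add_sub_cancel _ _⟩

section Decomposition

open DirectSum

variable {ι κ M N σ τ F : Type*} [DecidableEq ι] [DecidableEq κ] [AddCommMonoid M]
  [AddCommMonoid N] [SetLike σ M] [AddSubmonoidClass σ M] [SetLike τ N] [AddSubmonoidClass τ N]
  [FunLike F M N] [AddMonoidHomClass F M N] (ℳ : ι → σ) [Decomposition ℳ]

lemma coe_decompose_map_of_injective (𝒩 : κ → τ) [Decomposition 𝒩] {f : F} {φ : ι → κ}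
    (hφ : Function.Injective φ) (hf : ∀ i, ∀ x ∈ ℳ i, f x ∈ 𝒩 (φ i)) (x : M) (j : ι) :
    (decompose 𝒩 (f x) (φ j) : N) = f (decompose ℳ x j) := by
  induction x using Decomposition.inductionOn ℳ with
  | zero => simp
  | @homogeneous i x =>
    have hfx := hf i x x.2
    by_cases hij : i = j
    · subst hij
      rw [decompose_of_mem_same 𝒩 hfx, decompose_of_mem_same ℳ x.2]
    · rw [decompose_of_mem_ne 𝒩 hfx (hφ.ne hij), decompose_of_mem_ne ℳ x.2 hij, map_zero]
  | add x y hx hy => simp [decompose_add, hx, hy]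

lemma map_eq_map_decompose_of_forall_ne {f : F} {n : ι}
    (hf : ∀ i, i ≠ n → ∀ x ∈ ℳ i, f x = 0) (x : M) : f x = f (decompose ℳ x n) := by
  induction x using Decomposition.inductionOn ℳ with
  | zero => simp
  | @homogeneous i x =>
    by_cases hin : i = n
    · subst hin
      rw [decompose_of_mem_same ℳ x.2]
    · rw [hf i hin x x.2, decompose_of_mem_ne ℳ x.2 hin, map_zero]
  | add x y hx hy => simp [decompose_add, ← hx, ← hy]

end Decomposition

lemma map_mul_eq_map_mul_decompose {ι A N σ F : Type*} [DecidableEq ι] [AddLeftCancelMonoid ι]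
    [Semiring A] [SetLike σ A] [AddSubmonoidClass σ A] [AddCommMonoid N] [FunLike F A N]
    [AddMonoidHomClass F A N] (𝒜 : ι → σ) [GradedRing 𝒜] {f : F} {p q : ι}
    (hf : ∀ i, i ≠ p + q → ∀ a ∈ 𝒜 i, f a = 0) {g : A} (hg : g ∈ 𝒜 p) (z : A) :
    f (g * z) = f (g * DirectSum.decompose 𝒜 z q) := by
  rw [map_eq_map_decompose_of_forall_ne 𝒜 hf,
    DirectSum.coe_decompose_mul_add_of_left_mem 𝒜 hg]

section GradedDerivation

variable {R A : Type*} [CommRing R] [Ring A] [Algebra R A]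

/-- A graded derivation of degree `+1` of an `ℕ`-graded algebra: a differential without the
condition `d ∘ d = 0`, over an arbitrary commutative ring of coefficients. -/
structure IsGradedDerivation (𝒜 : ℕ → Submodule R A) (d : A →ₗ[R] A) : Prop where
  map_mem : ∀ i, ∀ a ∈ 𝒜 i, d a ∈ 𝒜 (i + 1)
  leibniz : ∀ i, ∀ a b, a ∈ 𝒜 i → d (a * b) = d a * b + (-1 : R) ^ i • (a * d b)

lemma IsDifferential.isGradedDerivation {k A : Type} [Field k] [Ring A] [Algebra k A]
    {𝒜 : ℕ → Submodule k A} {d : A →ₗ[k] A} (hd : IsDifferential 𝒜 d) :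
    IsGradedDerivation 𝒜 d :=
  ⟨hd.grade, hd.leibniz⟩

/-- The bilinear form `(a, b) ↦ ε (a * b)` attached to an orientation `ε`; its left kernel is the
orphan ideal. -/
def pairing (ε : A →ₗ[R] R) : A →ₗ[R] A →ₗ[R] R :=
  (LinearMap.mul R A).compr₂ ε

variable {𝒜 : ℕ → Submodule R A} {d : A →ₗ[R] A} {ε : A →ₗ[R] R}

lemma IsGradedDerivation.decompose_apply_eq_zero [GradedRing 𝒜] (hd : IsGradedDerivation 𝒜 d)
    {z : A} (hz : d z = 0) (j : ℕ) : d (DirectSum.decompose 𝒜 z j) = 0 := by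
  rw [← coe_decompose_map_of_injective 𝒜 𝒜 (add_left_injective 1) hd.map_mem, hz,
    DirectSum.decompose_zero, DirectSum.zero_apply, ZeroMemClass.coe_zero]

lemma IsGradedDerivation.range_le_ker_pairing (hd : IsGradedDerivation 𝒜 d)
    (hεd : ∀ a, ε (d a) = 0) {p : ℕ} {g : A} (hg : g ∈ 𝒜 p) (hdg : ∀ b, ε (d g * b) = 0) :
    LinearMap.range d ≤ LinearMap.ker (pairing ε g) := by
  rintro _ ⟨b, rfl⟩
  have hsign : (-1 : R) ^ p • ε (g * d b) = 0 := by
    simpa only [hd.leibniz p g b hg, map_add, hdg, zero_add, map_smul] using hεd (g * b)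
  exact (isUnit_one.neg.pow p).smul_eq_zero.1 hsign

lemma IsGradedDerivation.ker_le_ker_pairing [GradedRing 𝒜] (hd : IsGradedDerivation 𝒜 d)
    {p q : ℕ} (hε : ∀ i, i ≠ p + q → ∀ a ∈ 𝒜 i, ε a = 0) (hεd : ∀ a, ε (d a) = 0)
    {g : A} (hg : g ∈ 𝒜 p) (hdg : ∀ b, ε (d g * b) = 0) {S : Submodule R A}
    (hS : 𝒜 q ⊓ LinearMap.ker d ≤ S ⊔ LinearMap.range d)
    (hgS : S ≤ LinearMap.ker (pairing ε g)) :
    LinearMap.ker d ≤ LinearMap.ker (pairing ε g) := by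
  intro z hz
  have hcocycles : 𝒜 q ⊓ LinearMap.ker d ≤ LinearMap.ker (pairing ε g) :=
    hS.trans (sup_le hgS (hd.range_le_ker_pairing hεd hg hdg))
  have hzq : ε (g * DirectSum.decompose 𝒜 z q) = 0 :=
    hcocycles ⟨SetLike.coe_mem _, hd.decompose_apply_eq_zero hz q⟩
  exact (map_mul_eq_map_mul_decompose 𝒜 hε hg z).trans hzq

end GradedDerivation

theorem gamma_dual_orthogonal_general {R A ι : Type*} [CommRing R] [Ring A] [Algebra R A]
    [Fintype ι] [DecidableEq ι] {𝒜 : ℕ → Submodule R A} [GradedRing 𝒜] {d : A →ₗ[R] A}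
    (hd : IsGradedDerivation 𝒜 d) {ε : A →ₗ[R] R} {p q : ℕ}
    (hε : ∀ i, i ≠ p + q → ∀ a ∈ 𝒜 i, ε a = 0) (hεd : ∀ a, ε (d a) = 0)
    {γ' : A} (hγ' : γ' ∈ 𝒜 p) (hdγ' : ∀ b, ε (d γ' * b) = 0) {h : ι → A}
    (hspan : ∀ z ∈ 𝒜 q, d z = 0 → ∃ c : ι → R, z - ∑ j, c j • h j ∈ LinearMap.range d)
    {hstar : ι → A} (hstar_mem : ∀ j, hstar j ∈ 𝒜 p) (hstar_cocycle : ∀ j, d (hstar j) = 0)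
    (hdual : ∀ i j, ε (hstar i * h j) = if i = j then 1 else 0) :
    d (γ' - ∑ j, ε (γ' * h j) • hstar j) = d γ' ∧
      ∀ z, d z = 0 → ε ((γ' - ∑ j, ε (γ' * h j) • hstar j) * z) = 0 := by
  let γ := dualResidual (pairing ε) h hstar γ'
  have hdγ : d γ = d γ' := map_dualResidual (pairing ε) h hstar_cocycle γ'
  have hγ : γ ∈ 𝒜 p := dualResidual_mem (pairing ε) h hγ' hstar_mem
  have hγh : Submodule.span R (Set.range h) ≤ LinearMap.ker (pairing ε γ) :=
    span_range_le_ker_dualResidual hdual γ'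
  have hcover : 𝒜 q ⊓ LinearMap.ker d ≤ Submodule.span R (Set.range h) ⊔ LinearMap.range d := by
    rintro z ⟨hzq, hz⟩
    obtain ⟨c, hc⟩ := hspan z hzq hz
    exact mem_span_range_sup_of_sub_sum_mem c hc
  exact ⟨hdγ, hd.ker_le_ker_pairing hε hεd hγ (hdγ ▸ hdγ') hcover hγh⟩

/-- with `γ_i := γ'_i − Σ_j ε(γ'_i h_j) h*_j` one has `d γ_i = α_i`
and `ε(γ_i · z) = 0` for every cocycle `z`.  Here the `h_j` are cocycles whose classes
form a basis of the cohomology in the degree `Dm` complementary to `Km = deg γ'_i`,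
and the `h*_j` are dual cocycles with `ε(h*_a h_b) = δ_{ab}`. -/
theorem gamma_dual_orthogonal {k A : Type} [Field k] [Ring A] [Algebra k A]
    (𝒜 : ℕ → Submodule k A) [GradedRing 𝒜]
    (d : A →ₗ[k] A) (n : ℕ) (ε : A →ₗ[k] k)
    (hgc : GradedComm 𝒜) (hd : IsDifferential 𝒜 d)
    (hconn : ∀ a ∈ 𝒜 0, ∃ r : k, a = r • (1 : A))
    (hft : ∀ i : ℕ, FiniteDimensional k (𝒜 i))
    (hor : IsOrientation 𝒜 d n ε) (hpd : CohomologyPD 𝒜 d n ε)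
    (l m Km Dm : ℕ) (hdeg : Km + Dm = n)
    (α : Fin l → A) (hαm : ∀ i, α i ∈ 𝒜 (Km + 1)) (hαz : ∀ i, d (α i) = 0)
    (hαo : ∀ i, α i ∈ Orphans ε)
    (γ' : Fin l → A) (hγ'm : ∀ i, γ' i ∈ 𝒜 Km) (hγ'd : ∀ i, d (γ' i) = α i)
    (h : Fin m → A) (hhm : ∀ jj, h jj ∈ 𝒜 Dm) (hhz : ∀ jj, d (h jj) = 0)
    (hbasis : ∀ z ∈ 𝒜 Dm, d z = 0 →
      ∃ cf : Fin m → k, z - ∑ jj, cf jj • h jj ∈ LinearMap.range d)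
    (hstar : Fin m → A) (hsm : ∀ jj, hstar jj ∈ 𝒜 Km) (hsz : ∀ jj, d (hstar jj) = 0)
    (hdual : ∀ a b : Fin m, ε (hstar a * h b) = if a = b then 1 else 0) :
    ∀ i : Fin l,
      d (γ' i - ∑ jj, ε (γ' i * h jj) • hstar jj) = α i ∧
      (∀ z : A, d z = 0 →
        ε ((γ' i - ∑ jj, ε (γ' i * h jj) • hstar jj) * z) = 0) := by
  subst hdeg
  exact fun i ↦ hγ'd i ▸ gamma_dual_orthogonal_general hd.isGradedDerivation hor.homog hor.eps_d
    (hγ'm i) ((mem_orphans ε _).1 (hγ'd i ▸ hαo i)) hbasis hsm hsz hdual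

end PDCDGA
end

section
/- If n/2 ≤ i ≤ k − 3, then Ô^i = O^i: the orphan ideals of A and Â agree in these degrees. -/
namespace PDCDGA

variable {k : Type} [Field k]

/-! Every monomial in the `c_i, w_i` other than `1` has degree at least `q`, so `j : A → Â` is
surjective in degrees below `q`. Since the orientation of `Â` lives in degree `n`, an element of
degree `i` is an orphan as soon as it pairs trivially with degree `n - i`; and when `n/2 ≤ i < q`,
both `i` and `n - i` lie in the range where `j` is surjective. -/

section Graded

variable {ι κ A B σ τ : Type*} [Semiring A] [Semiring B]
  [SetLike σ A] [AddSubmonoidClass σ A] [SetLike τ B] [AddSubmonoidClass τ B]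
  [DecidableEq ι] [AddCommMonoid ι] [PartialOrder ι] [CanonicallyOrderedAdd ι]
  {𝒜 : ι → σ} [GradedRing 𝒜] {ℬ : ι → τ} [GradedRing ℬ] {i : ι}

lemma exists_mem_grade_map_eq_decompose_mul (f : 𝒜 →+*ᵍ ℬ) (a : A) {b : B}
    (hb : b = 1 ∨ ∃ p, ¬p ≤ i ∧ b ∈ ℬ p) :
    ∃ a' ∈ 𝒜 i, f a' = DirectSum.decompose ℬ (f a * b) i := by
  obtain rfl | ⟨p, hpi, hbp⟩ := hb
  · exact ⟨_, (DirectSum.decompose 𝒜 a i).2, by simp⟩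
  · refine ⟨0, zero_mem _, ?_⟩
    rw [DirectSum.coe_decompose_mul_of_right_mem_of_not_le ℬ hbp hpi, map_zero]

lemma surjOn_grade_of_exists_sum (f : 𝒜 →+*ᵍ ℬ) {b : κ → B}
    (hb : ∀ μ, b μ = 1 ∨ ∃ p, ¬p ≤ i ∧ b μ ∈ ℬ p)
    (hspan : ∀ x ∈ ℬ i, ∃ g : κ →₀ A, (g.sum fun μ a => f a * b μ) = x) :
    Set.SurjOn f (𝒜 i) (ℬ i) := by
  intro x hx
  obtain ⟨g, hg⟩ := hspan x hx
  choose a ha hfa using fun μ => exists_mem_grade_map_eq_decompose_mul f (g μ) (hb μ)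
  refine ⟨∑ μ ∈ g.support, a μ, sum_mem fun μ _ => ha μ, ?_⟩
  calc f (∑ μ ∈ g.support, a μ)
      = ∑ μ ∈ g.support, (DirectSum.decompose ℬ (f (g μ) * b μ) i : B) := by
        simp only [map_sum, hfa]
    _ = DirectSum.decompose ℬ (g.sum fun μ a => f a * b μ) i := by
        rw [Finsupp.sum, DirectSum.decompose_sum, DFinsupp.finsetSum_apply,
          AddSubmonoidClass.coe_finsetSum]
    _ = x := by rw [hg, DirectSum.decompose_of_mem_same ℬ hx]

end Graded

section Monomial

variable {B : Type} {σ : Type*} [Monoid B] [SetLike σ B] {l : ℕ} {c w : Fin l → B}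

lemma monomial_zero : monomial c w 0 = 1 := by
  simp [monomial]

lemma monomial_mem_grade {ι : Type*} [AddCommMonoid ι] {ℬ : ι → σ} [SetLike.GradedMonoid ℬ]
    {p r : ι} (hc : ∀ i, c i ∈ ℬ p) (hw : ∀ i, w i ∈ ℬ r) (s : (Fin l → ℕ) × (Fin l → ℕ)) :
    monomial c w s ∈ ℬ (∑ i, s.1 i • p + ∑ i, s.2 i • r) := by
  rw [Fin.sum_univ_def, Fin.sum_univ_def]
  exact SetLike.mul_mem_graded
    (SetLike.list_prod_map_mem_graded _ _ _ fun i _ => SetLike.pow_mem_graded _ (hc i))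
    (SetLike.list_prod_map_mem_graded _ _ _ fun i _ => SetLike.pow_mem_graded _ (hw i))

lemma le_sum_smul_of_ne_zero {ι : Type*} [Fintype ι] {s : ι → ℕ} (hs : s ≠ 0) (p : ℕ) :
    p ≤ ∑ i, s i • p := by
  obtain ⟨i, hi⟩ := Function.ne_iff.mp hs
  calc p ≤ s i • p := Nat.le_mul_of_pos_left p (Nat.pos_of_ne_zero hi)
    _ ≤ ∑ i, s i • p :=
      Finset.single_le_sum (f := fun i => s i • p) (fun _ _ => Nat.zero_le _) (Finset.mem_univ i)

lemma monomial_eq_one_or_mem_grade {ℬ : ℕ → σ} [SetLike.GradedMonoid ℬ] {p r : ℕ}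
    (hc : ∀ i, c i ∈ ℬ p) (hw : ∀ i, w i ∈ ℬ r) (s : (Fin l → ℕ) × (Fin l → ℕ)) :
    monomial c w s = 1 ∨ ∃ m, min p r ≤ m ∧ monomial c w s ∈ ℬ m := by
  by_cases hs : s = 0
  · exact .inl (hs ▸ monomial_zero)
  · refine .inr ⟨_, ?_, monomial_mem_grade hc hw s⟩
    obtain hs | hs : s.1 ≠ 0 ∨ s.2 ≠ 0 := by
      contrapose! hs
      exact Prod.ext hs.1 hs.2
    · exact (min_le_left p r).trans ((le_sum_smul_of_ne_zero hs p).trans (Nat.le_add_right _ _))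
    · exact (min_le_right p r).trans ((le_sum_smul_of_ne_zero hs r).trans (Nat.le_add_left _ _))

end Monomial

section Orphans

variable {A B : Type} [Ring A] [Algebra k A] [Ring B] [Algebra k B]
  {ε : A →ₗ[k] k} {E : B →ₗ[k] k}

lemma mem_orphans_of_map_mem_orphans {F : Type*} [FunLike F A B] [MulHomClass F A B] {f : F}
    (hE : ∀ a, E (f a) = ε a) {a : A} (ha : f a ∈ Orphans E) : a ∈ Orphans ε := by
  rw [mem_orphans] at ha ⊢
  intro b
  rw [← hE, map_mul]
  exact ha (f b)

lemma mem_orphans_iff_of_mem_grade {ι : Type*} [DecidableEq ι] [AddMonoid ι]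
    {ℬ : ι → Submodule k B} [GradedAlgebra ℬ] {n i : ι}
    (hE : ∀ m, m ≠ n → ∀ x ∈ ℬ m, E x = 0) {x : B} (hx : x ∈ ℬ i) :
    x ∈ Orphans E ↔ ∀ p, i + p = n → ∀ y ∈ ℬ p, E (x * y) = 0 := by
  rw [mem_orphans]
  refine ⟨fun h _ _ y _ => h y, fun h y => ?_⟩
  induction y using DirectSum.Decomposition.inductionOn ℬ with
  | zero => rw [mul_zero, map_zero]
  | @homogeneous p y =>
    by_cases hp : i + p = n
    · exact h p hp y y.2
    · exact hE _ hp _ (SetLike.mul_mem_graded hx y.2)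
  | add y z hy hz => rw [mul_add, map_add, hy, hz, add_zero]

lemma map_mem_orphans_iff {ι : Type*} [DecidableEq ι] [AddMonoid ι]
    {𝒜 : ι → Submodule k A} [GradedAlgebra 𝒜] {ℬ : ι → Submodule k B} [GradedAlgebra ℬ] {n i : ι}
    (f : 𝒜 →ₐᵍ[k] ℬ) (hEf : ∀ a, E (f a) = ε a) (hE : ∀ m, m ≠ n → ∀ x ∈ ℬ m, E x = 0)
    (hsurj : ∀ p, i + p = n → Set.SurjOn f (𝒜 p) (ℬ p)) {a : A} (ha : a ∈ 𝒜 i) :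
    f a ∈ Orphans E ↔ a ∈ Orphans ε := by
  refine ⟨mem_orphans_of_map_mem_orphans hEf, fun hao => ?_⟩
  rw [mem_orphans_iff_of_mem_grade hE (Graded.map_mem f ha)]
  intro p hp y hy
  obtain ⟨b, -, rfl⟩ := hsurj p hp hy
  rw [← map_mul, hEf]
  exact (mem_orphans ε a).mp hao b

theorem orphans_agree_in_middle_range_general
    {𝒜 : ℕ → Submodule k A} [GradedAlgebra 𝒜] {ℬ : ℕ → Submodule k B} [GradedAlgebra ℬ]
    {n q l : ℕ} (j : 𝒜 →ₐᵍ[k] ℬ) (hEj : ∀ a, E (j a) = ε a)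
    (hE : ∀ m, m ≠ n → ∀ x ∈ ℬ m, E x = 0)
    {c w : Fin l → B} (hc : ∀ i, c i ∈ ℬ (q + 1)) (hw : ∀ i, w i ∈ ℬ q)
    (hspan : ∀ x : B, ∃ f : MonIdx q l →₀ A, (f.sum fun μ a => j a * monomial c w μ.1) = x)
    {i : ℕ} (hiq : i < q) (hni : n < i + q) :
    (∀ a ∈ 𝒜 i, (a ∈ Orphans ε ↔ j a ∈ Orphans E)) ∧
      (∀ x ∈ ℬ i, x ∈ Orphans E → ∃ a : A, a ∈ 𝒜 i ∧ a ∈ Orphans ε ∧ x = j a) := by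
  have hsurj (m : ℕ) (hm : m < q) : Set.SurjOn j (𝒜 m) (ℬ m) := by
    refine surjOn_grade_of_exists_sum j.toGradedRingHom (fun μ => ?_) fun x _ => hspan x
    exact (monomial_eq_one_or_mem_grade hc hw μ.1).imp_right fun ⟨p, hp, hμ⟩ => ⟨p, by omega, hμ⟩
  have hiff {a : A} (ha : a ∈ 𝒜 i) : j a ∈ Orphans E ↔ a ∈ Orphans ε :=
    map_mem_orphans_iff j hEj hE (fun p hp => hsurj p (by omega)) ha
  refine ⟨fun a ha => (hiff ha).symm, fun x hx hxo => ?_⟩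
  obtain ⟨a, ha, rfl⟩ := hsurj i hiq hx
  exact ⟨a, ha, (hiff ha).mp hxo, rfl⟩

end Orphans

/-- if `n/2 ≤ i ≤ k − 3` (with `k = q + 2 ≥ n/2 + 2`), then
`Ôⁱ = Oⁱ`: under the identification `Âⁱ = Aⁱ`, the orphan ideals of `A` and `Â`
agree in these degrees. -/
theorem orphans_agree_in_middle_range {k A B : Type} [Field k] [Ring A] [Algebra k A] [Ring B] [Algebra k B]
    (𝒜 : ℕ → Submodule k A) [GradedRing 𝒜] (ℬ : ℕ → Submodule k B) [GradedRing ℬ]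
    (d : A →ₗ[k] A) (D : B →ₗ[k] B) (n q l : ℕ)
    (ε : A →ₗ[k] k) (E : B →ₗ[k] k)
    (hgcA : GradedComm 𝒜) (hdA : IsDifferential 𝒜 d)
    (hgcB : GradedComm ℬ) (hdB : IsDifferential ℬ D)
    (hft : ∀ i : ℕ, FiniteDimensional k (𝒜 i))
    (hconn : ∀ a ∈ 𝒜 0, ∃ r : k, a = r • (1 : A))
    (h1 : 𝒜 1 = ⊥) (h2 : ∀ a ∈ 𝒜 2, d a = 0)
    (hn : 7 ≤ n) (hk : n + 2 ≤ 2 * (q + 2))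
    (hor : IsOrientation 𝒜 d n ε) (hpd : CohomologyPD 𝒜 d n ε)
    (α γ : Fin l → A)
    (hαm : ∀ i, α i ∈ 𝒜 (q + 2)) (hαz : ∀ i, d (α i) = 0) (hαo : ∀ i, α i ∈ Orphans ε)
    (hspan : ∀ a : A, a ∈ Orphans ε → a ∈ 𝒜 (q + 2) → d a = 0 →
      ∃ (b : A) (cf : Fin l → k), b ∈ Orphans ε ∧ b ∈ 𝒜 (q + 1) ∧ a = d b + ∑ i, cf i • α i)
    (hind : ∀ (cf : Fin l → k) (b : A), b ∈ Orphans ε → b ∈ 𝒜 (q + 1) →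
      (∑ i, cf i • α i) = d b → ∀ i, cf i = 0)
    (hγm : ∀ i, γ i ∈ 𝒜 (q + 1)) (hγd : ∀ i, d (γ i) = α i)
    (hγperp : ∀ (i : Fin l) (z : A), d z = 0 → ε (γ i * z) = 0)
    (T Z : Submodule k A)
    (hT : IsCompl T (LinearMap.range d)) (hγT : ∀ i, γ i ∈ T)
    (hZo : Z ≤ Orphans ε)
    (hZdisj : Z ⊓ (Orphans ε ⊓ LinearMap.range d) = ⊥)
    (hZsup : Z ⊔ (Orphans ε ⊓ LinearMap.range d) = Orphans ε)
    (hZT : Z ≤ T)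
    (hZgr : ∀ z ∈ Z, ∀ i : ℕ, ((DirectSum.decompose 𝒜 z i : 𝒜 i) : A) ∈ Z)
    (j : A →ₐ[k] B) (hjgr : ∀ i : ℕ, ∀ a ∈ 𝒜 i, j a ∈ ℬ i)
    (hjch : ∀ a : A, D (j a) = j (d a))
    (c w : Fin l → B) (hcm : ∀ i, c i ∈ ℬ (q + 1)) (hwm : ∀ i, w i ∈ ℬ q)
    (hDc : ∀ i, D (c i) = j (α i)) (hDw : ∀ i, D (w i) = c i - j (γ i))
    (hcase : CharZero k ∨ Odd (q + 2))
    (hfree : ∀ x : B, ∃! f : MonIdx q l →₀ A,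
      (f.sum fun μ a => j a * monomial c w μ.1) = x)
    (hEj : ∀ a : A, E (j a) = ε a)
    (hEwd : ∀ (i : Fin l) (ξ : A), E (w i * j (d ξ)) = ((-1 : k) ^ (q + 2)) * ε (γ i * ξ))
    (hEcc : ∀ i i' : Fin l, E (c i * c i') = - ε (γ i * γ i'))
    (hEw : ∀ i : Fin l, E (w i) = 0)
    (hEwT : ∀ (i : Fin l) (t : A), t ∈ T → E (w i * j t) = 0)
    (hEc : ∀ i : Fin l, E (c i) = 0)
    (hEcj : ∀ (i : Fin l) (ξ : A), E (c i * j ξ) = 0)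
    (hEccj : ∀ (i i' : Fin l) (ξ : A), E (c i * c i' * j ξ) = 0)
    (hEcw : ∀ i i' : Fin l, E (c i * w i') = 0)
    (hEcwj : ∀ (i i' : Fin l) (ξ : A), E (c i * w i' * j ξ) = 0)
    (hEww : ∀ i i' : Fin l, E (w i * w i') = 0)
    (hEwwj : ∀ (i i' : Fin l) (ξ : A), E (w i * w i' * j ξ) = 0)
    (hEhom : ∀ m : ℕ, m ≠ n → ∀ x ∈ ℬ m, E x = 0)
    (hk2 : n + 4 ≤ 2 * (q + 2)) :
    ∀ i : ℕ, n ≤ 2 * i → i + 3 ≤ q + 2 →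
      (∀ a ∈ 𝒜 i, (a ∈ Orphans ε ↔ j a ∈ Orphans E)) ∧
      (∀ x ∈ ℬ i, x ∈ Orphans E → ∃ a : A, a ∈ 𝒜 i ∧ a ∈ Orphans ε ∧ x = j a) := by
  intro i hi hiq
  exact orphans_agree_in_middle_range_general { j with map_mem := hjgr _ _ } hEj hEhom hcm hwm
    (fun x => (hfree x).exists) (by omega) (by omega)

end PDCDGA
end
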